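/- Let n ≥ 2, let 2 ≤ k ≤ n be an integer, and let f₀ > 0. There exists a constant K > 0 depending only on n, k, f₀ with the following property. Let κ ∈ ℝ^n with κ_1 ≥ κ_2 ≥ … ≥ κ_n ≥ 0 and σ_k(κ) ≥ f₀, and set P = Σ_{l=1}^n κ_l². Then for every index i ≠ 1 with √3·κ_i ≤ κ_1 and every ξ ∈ ℝ^n: A_i + B_i + C_i + D_i − E_i ≥ 0, where A_i = (κ_i/P)·( K·((σ_k)_ξ(κ))² − Σ_{p≠q} σ_{k−2}(κ|pq) ξ_p ξ_q ), B_i = (2/P)·Σ_{j≠i} κ_j·σ_{k−2}(κ|ij)·ξ_j², C_i = (2/P)·Σ_{j≠i} σ_{k−1}(κ|j)·ξ_j², D_i = (σ_{k−1}(κ|i)/P)·Σ_{j=1}^n ξ_j², and E_i = (2σ_{k−1}(κ|i)/P²)·( Σ_{j=1}^n κ_j ξ_j )². -/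

import Mathlib

/-!
Write `σ_m(A; x)` for `esymmOn A m x`. After multiplication by `P = Σ κ_l²` the inequality splits
into two independent parts.

* `A_i ≥ 0` with `K = 1 / f₀`. This is the log-concavity of `σ_k` on the nonnegative orthant, in
  the form `σ_k · Σ_{p≠q} σ_{k-2}(κ|pq) ξ_p ξ_q ≤ ((σ_k)_ξ)²` (`hessian_le_sq_deriv`). It follows
  from the superadditivity of the quotients `q_m = σ_m / σ_{m-1}` (`quot_superadd`), proved by
  induction on `m` from `m q_m(x) = Σ_i H(x_i, q_{m-1}(x|i))` with `H(a, b) = ab / (a + b)`, which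
  is superadditive and increasing. Multiplying up, `4^k σ_k(x) σ_k(y) ≤ σ_k(x + y)²`, so
  `t ↦ σ_k(κ + tξ) σ_k(κ - tξ)` has a local maximum at `0`; the second-order condition there is the
  claim for positive `κ`, and the general case follows by continuity.

* `B_i + C_i + D_i - E_i ≥ 0`. Since `σ_{k-1}(κ|i) = κ_j σ_{k-2}(κ|ij) + σ_{k-1}(κ|ij)` is at most
  `κ_j σ_{k-2}(κ|ij) + σ_{k-1}(κ|j)`, it suffices that
  `2 (Σ κ_j ξ_j)² ≤ P (3 Σ_{j≠i} ξ_j² + ξ_i²)`, which is a weighted Cauchy–Schwarz inequality valid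
  as soon as `4 κ_i² ≤ P`; and `P ≥ κ_1² + κ_i² ≥ 4 κ_i²`.
-/

open Finset

/-- The `m`-th elementary symmetric polynomial of the entries of `x` indexed by `A`,
with the convention that it vanishes for negative `m` (and for `m` larger than `A.card`). -/
noncomputable def esymmOn {n : ℕ} (A : Finset (Fin n)) (m : ℤ) (x : Fin n → ℝ) : ℝ :=
  if 0 ≤ m then ∑ s ∈ Finset.powersetCard m.toNat A, ∏ i ∈ s, x i else 0

/-- `esym m x` is σ_m(x), the `m`-th elementary symmetric polynomial of `x`. -/
noncomputable def esym {n : ℕ} (m : ℤ) (x : Fin n → ℝ) : ℝ := esymmOn Finset.univ m x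

/-- `esymD1 m x i` is σ_m(x|i), the `m`-th elementary symmetric polynomial of the
entries of `x` with the `i`-th entry deleted. -/
noncomputable def esymD1 {n : ℕ} (m : ℤ) (x : Fin n → ℝ) (i : Fin n) : ℝ :=
  esymmOn (Finset.univ.erase i) m x

/-- `esymD2 m x i j` is σ_m(x|ij), the `m`-th elementary symmetric polynomial of the
entries of `x` with the `i`-th and `j`-th entries deleted. -/
noncomputable def esymD2 {n : ℕ} (m : ℤ) (x : Fin n → ℝ) (i j : Fin n) : ℝ :=
  esymmOn ((Finset.univ.erase i).erase j) m x

/-- The Garding cone Γ_k. -/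
def GardingCone (n k : ℕ) : Set (Fin n → ℝ) :=
  {x | ∀ m : ℕ, 1 ≤ m → m ≤ k → 0 < esym (m : ℤ) x}

/-- `(σ_m)_ξ(x)`, the derivative of σ_m at `x` in the diagonal direction `ξ`. -/
noncomputable def esymDeriv {n : ℕ} (m : ℤ) (x ξ : Fin n → ℝ) : ℝ :=
  ∑ p, esymD1 (m - 1) x p * ξ p

/-- The divided difference `g(s,t)` of the exponential function. -/
noncomputable def expDD (s t : ℝ) : ℝ :=
  if s = t then Real.exp t else (Real.exp s - Real.exp t) / (s - t)

/-! ### Basic identities for elementary symmetric polynomials -/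

lemma esymmOn_neg {n : ℕ} (A : Finset (Fin n)) {m : ℤ} (hm : m < 0) (x : Fin n → ℝ) :
    esymmOn A m x = 0 := by
  simp [esymmOn, not_le.mpr hm]

lemma esymmOn_zero {n : ℕ} (A : Finset (Fin n)) (x : Fin n → ℝ) :
    esymmOn A 0 x = 1 := by
  simp [esymmOn]

lemma esymmOn_natCast {n : ℕ} (A : Finset (Fin n)) (m : ℕ) (x : Fin n → ℝ) :
    esymmOn A (m : ℤ) x = ∑ s ∈ Finset.powersetCard m A, ∏ i ∈ s, x i := by
  simp [esymmOn]

lemma esymmOn_empty {n : ℕ} {m : ℤ} (hm : m ≠ 0) (x : Fin n → ℝ) :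
    esymmOn ∅ m x = 0 := by
  rcases lt_or_ge m 0 with h | h
  · exact esymmOn_neg _ h x
  · lift m to ℕ using h
    rw [esymmOn_natCast, Finset.powersetCard_eq_empty.2, Finset.sum_empty]
    simp; omega

lemma esymmOn_insert {n : ℕ} {A : Finset (Fin n)} {a : Fin n} (ha : a ∉ A) (m : ℤ)
    (x : Fin n → ℝ) :
    esymmOn (insert a A) m x = x a * esymmOn A (m - 1) x + esymmOn A m x := by
  rcases lt_trichotomy m 0 with h | h | h
  · rw [esymmOn_neg _ h, esymmOn_neg _ h, esymmOn_neg _ (by omega)]; ring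
  · subst h
    rw [esymmOn_zero, esymmOn_zero, esymmOn_neg _ (by omega)]; ring
  · obtain ⟨l, rfl⟩ : ∃ l : ℕ, m = ((l + 1 : ℕ) : ℤ) := ⟨(m - 1).toNat, by omega⟩
    have e : (((l + 1 : ℕ) : ℤ) - 1) = (l : ℤ) := by push_cast; ring
    rw [e, esymmOn_natCast, esymmOn_natCast, esymmOn_natCast,
      Finset.powersetCard_succ_insert ha, Finset.sum_union, add_comm]
    · congr 1
      rw [Finset.sum_image, Finset.mul_sum]
      · refine Finset.sum_congr rfl fun s hs => ?_
        rw [Finset.prod_insert]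
        exact fun h' => ha ((Finset.mem_powersetCard.1 hs).1 h')
      · intro s hs t ht hst
        have hs' : a ∉ s := fun h' => ha ((Finset.mem_powersetCard.1 hs).1 h')
        have ht' : a ∉ t := fun h' => ha ((Finset.mem_powersetCard.1 ht).1 h')
        rw [← Finset.erase_insert hs', ← Finset.erase_insert ht', hst]
    · rw [Finset.disjoint_left]
      intro s hs hs'
      obtain ⟨t, _, rfl⟩ := Finset.mem_image.1 hs'
      exact ha ((Finset.mem_powersetCard.1 hs).1 (Finset.mem_insert_self a t))

lemma esymmOn_erase {n : ℕ} {A : Finset (Fin n)} {a : Fin n} (ha : a ∈ A) (m : ℤ)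
    (x : Fin n → ℝ) :
    esymmOn A m x = x a * esymmOn (A.erase a) (m - 1) x + esymmOn (A.erase a) m x := by
  conv_lhs => rw [← Finset.insert_erase ha]
  exact esymmOn_insert (Finset.notMem_erase a A) m x

/-- The recursion for deleting `p` from `insert a A`, summed against weights `w`. -/
lemma sum_esymmOn_insert_erase {n : ℕ} {A : Finset (Fin n)} {a : Fin n} (ha : a ∉ A) (m : ℤ)
    (x w : Fin n → ℝ) :
    ∑ p ∈ insert a A, esymmOn ((insert a A).erase p) m x * w p
      = esymmOn A m x * w a + x a * ∑ p ∈ A, esymmOn (A.erase p) (m - 1) x * w p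
        + ∑ p ∈ A, esymmOn (A.erase p) m x * w p := by
  rw [Finset.sum_insert ha, Finset.erase_insert ha, Finset.mul_sum, add_assoc,
    ← Finset.sum_add_distrib]
  congr 1
  refine Finset.sum_congr rfl fun p hp => ?_
  have hne : a ≠ p := fun h => ha (h ▸ hp)
  rw [Finset.erase_insert_of_ne hne, esymmOn_insert (fun h => ha (Finset.mem_of_mem_erase h))]
  ring

/-- Euler's identity for the homogeneous polynomial `σ_m`. -/
lemma esymmOn_euler {n : ℕ} (A : Finset (Fin n)) (m : ℤ) (x : Fin n → ℝ) :
    ∑ p ∈ A, esymmOn (A.erase p) (m - 1) x * x p = m * esymmOn A m x := by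
  induction A using Finset.induction_on generalizing m with
  | empty =>
    rcases eq_or_ne m 0 with rfl | h
    · simp
    · simp [esymmOn_empty h]
  | insert a A ha ih =>
    rw [sum_esymmOn_insert_erase ha, ih, ih, esymmOn_insert ha]
    push_cast; ring

lemma esymmOn_nonneg {n : ℕ} (A : Finset (Fin n)) (m : ℤ) {x : Fin n → ℝ}
    (hx : ∀ i, 0 ≤ x i) : 0 ≤ esymmOn A m x := by
  unfold esymmOn
  split_ifs
  · exact Finset.sum_nonneg fun s _ => Finset.prod_nonneg fun i _ => hx i
  · exact le_rfl

lemma esymmOn_pos {n : ℕ} {A : Finset (Fin n)} {m : ℕ} (hm : m ≤ A.card) {x : Fin n → ℝ}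
    (hx : ∀ i, 0 < x i) : 0 < esymmOn A (m : ℤ) x := by
  rw [esymmOn_natCast]
  exact Finset.sum_pos (fun s _ => Finset.prod_pos fun i _ => hx i)
    (Finset.powersetCard_nonempty.2 hm)

lemma esymmOn_eq_zero {n : ℕ} {A : Finset (Fin n)} {m : ℕ} (hm : A.card < m) (x : Fin n → ℝ) :
    esymmOn A (m : ℤ) x = 0 := by
  rw [esymmOn_natCast, Finset.powersetCard_eq_empty.2 hm, Finset.sum_empty]

/-! ### Superadditivity of the quotients and log-concavity -/

/-- `H(a, b) = ab / (a + b)` is superadditive, and increasing in its second argument. -/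
lemma harmonic_superadd {a b c d e : ℝ} (ha : 0 < a) (hb : 0 < b) (hc : 0 < c) (hd : 0 < d)
    (he : b + d ≤ e) :
    a * b / (a + b) + c * d / (c + d) ≤ (a + c) * e / (a + c + e) := by
  have h1 : (a + c) * (b + d) / (a + c + (b + d)) ≤ (a + c) * e / (a + c + e) := by
    rw [div_le_div_iff₀ (by positivity) (by linarith)]
    nlinarith [mul_le_mul_of_nonneg_left he (sq_nonneg (a + c))]
  refine le_trans ?_ h1
  rw [div_add_div _ _ (by positivity) (by positivity), div_le_div_iff₀ (by positivity)
    (by positivity)]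
  nlinarith [sq_nonneg (a * d - b * c)]

/-- The Marcus–Lopes recursion `(m+2) q_{m+2}(x) = Σ_i H(x_i, q_{m+1}(x|i))`. -/
lemma quot_recursion {n : ℕ} {A : Finset (Fin n)} {m : ℕ} (hm : m + 2 ≤ A.card)
    {x : Fin n → ℝ} (hx : ∀ i, 0 < x i) :
    ((m : ℝ) + 2) * (esymmOn A ((m + 2 : ℕ) : ℤ) x / esymmOn A ((m + 1 : ℕ) : ℤ) x)
      = ∑ i ∈ A, x i * (esymmOn (A.erase i) ((m + 1 : ℕ) : ℤ) x
            / esymmOn (A.erase i) ((m : ℕ) : ℤ) x)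
          / (x i + esymmOn (A.erase i) ((m + 1 : ℕ) : ℤ) x
            / esymmOn (A.erase i) ((m : ℕ) : ℤ) x) := by
  have h := esymmOn_euler A ((m + 2 : ℕ) : ℤ) x
  have e : (((m + 2 : ℕ) : ℤ) - 1) = ((m + 1 : ℕ) : ℤ) := by push_cast; ring
  rw [e] at h
  have h' : ((m : ℝ) + 2) * esymmOn A ((m + 2 : ℕ) : ℤ) x
      = ∑ p ∈ A, esymmOn (A.erase p) ((m + 1 : ℕ) : ℤ) x * x p := by
    rw [h]; push_cast; ring
  rw [← mul_div_assoc, h', Finset.sum_div]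
  refine Finset.sum_congr rfl fun i hi => ?_
  have hc := Finset.card_erase_of_mem hi
  have p0 : 0 < esymmOn (A.erase i) (m : ℤ) x := esymmOn_pos (by omega) hx
  have p1 : 0 < esymmOn (A.erase i) ((m + 1 : ℕ) : ℤ) x := esymmOn_pos (by omega) hx
  have r := esymmOn_erase hi ((m + 1 : ℕ) : ℤ) x
  have e' : (((m + 1 : ℕ) : ℤ) - 1) = (m : ℤ) := by push_cast; ring
  rw [e'] at r
  rw [r]
  have := hx i
  field_simp

lemma quot_superadd {n : ℕ} (m : ℕ) (A : Finset (Fin n)) {x y : Fin n → ℝ}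
    (hx : ∀ i, 0 < x i) (hy : ∀ i, 0 < y i) :
    esymmOn A ((m + 1 : ℕ) : ℤ) x / esymmOn A (m : ℤ) x
        + esymmOn A ((m + 1 : ℕ) : ℤ) y / esymmOn A (m : ℤ) y
      ≤ esymmOn A ((m + 1 : ℕ) : ℤ) (x + y) / esymmOn A (m : ℤ) (x + y) := by
  have hxy : ∀ i, 0 < (x + y) i := fun i => add_pos (hx i) (hy i)
  induction m generalizing A with
  | zero =>
    have h1 : ∀ z : Fin n → ℝ, esymmOn A 1 z = ∑ i ∈ A, z i := by
      intro z
      have := esymmOn_euler A 1 z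
      simpa [esymmOn_zero] using this.symm
    simp [esymmOn_zero, h1, Finset.sum_add_distrib]
  | succ m ih =>
    rcases lt_or_ge A.card (m + 2) with h | h
    · simp only [esymmOn_eq_zero (show A.card < m + 1 + 1 by omega)]
      simp
    · have hm : (0 : ℝ) < (m : ℝ) + 2 := by positivity
      refine le_of_mul_le_mul_left ?_ hm
      rw [mul_add]
      have rx := quot_recursion h hx
      have ry := quot_recursion h hy
      have rxy := quot_recursion h hxy
      rw [show m + 1 + 1 = m + 2 from rfl, rx, ry, rxy, ← Finset.sum_add_distrib]
      refine Finset.sum_le_sum fun i hi => ?_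
      have hc := Finset.card_erase_of_mem hi
      exact harmonic_superadd (hx i)
        (div_pos (esymmOn_pos (by omega) hx) (esymmOn_pos (by omega) hx)) (hy i)
        (div_pos (esymmOn_pos (by omega) hy) (esymmOn_pos (by omega) hy)) (ih (A.erase i))

/-- Log-concavity of `σ_m`, in homogeneous midpoint form. -/
lemma esymmOn_logConcave {n : ℕ} (m : ℕ) (A : Finset (Fin n)) (hm : m ≤ A.card)
    {x y : Fin n → ℝ} (hx : ∀ i, 0 < x i) (hy : ∀ i, 0 < y i) :
    4 ^ m * (esymmOn A (m : ℤ) x * esymmOn A (m : ℤ) y) ≤ esymmOn A (m : ℤ) (x + y) ^ 2 := by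
  have hxy : ∀ i, 0 < (x + y) i := fun i => add_pos (hx i) (hy i)
  induction m with
  | zero => simp [esymmOn_zero]
  | succ m ih =>
    have ih := ih (by omega)
    have hq := quot_superadd m A hx hy
    have px := esymmOn_pos (show m ≤ A.card by omega) hx
    have py := esymmOn_pos (show m ≤ A.card by omega) hy
    have pxy := esymmOn_pos (show m ≤ A.card by omega) hxy
    have px' := esymmOn_pos hm hx
    have py' := esymmOn_pos hm hy
    have ex := div_mul_cancel₀ (esymmOn A ((m + 1 : ℕ) : ℤ) x) px.ne'
    have ey := div_mul_cancel₀ (esymmOn A ((m + 1 : ℕ) : ℤ) y) py.ne'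
    have exy := div_mul_cancel₀ (esymmOn A ((m + 1 : ℕ) : ℤ) (x + y)) pxy.ne'
    have qx := div_pos px' px
    have qy := div_pos py' py
    rw [← ex, ← ey, ← exy]
    set u := esymmOn A ((m + 1 : ℕ) : ℤ) x / esymmOn A (m : ℤ) x
    set v := esymmOn A ((m + 1 : ℕ) : ℤ) y / esymmOn A (m : ℤ) y
    set w := esymmOn A ((m + 1 : ℕ) : ℤ) (x + y) / esymmOn A (m : ℤ) (x + y)
    have huv : 4 * (u * v) ≤ w ^ 2 := by nlinarith [sq_nonneg (u - v)]
    calc _ = (4 * (u * v)) * (4 ^ m * (esymmOn A (m : ℤ) x * esymmOn A (m : ℤ) y)) := by ring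
      _ ≤ w ^ 2 * esymmOn A (m : ℤ) (x + y) ^ 2 := by gcongr
      _ = _ := by ring

lemma esymmOn_smul {n : ℕ} (m : ℕ) (A : Finset (Fin n)) (c : ℝ) (x : Fin n → ℝ) :
    esymmOn A (m : ℤ) (c • x) = c ^ m * esymmOn A (m : ℤ) x := by
  rw [esymmOn_natCast, esymmOn_natCast, Finset.mul_sum]
  refine Finset.sum_congr rfl fun s hs => ?_
  simp only [Pi.smul_apply, smul_eq_mul, Finset.prod_mul_distrib, Finset.prod_const,
    (Finset.mem_powersetCard.1 hs).2]

/-! ### The second-order consequence of log-concavity -/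

lemma esymmOn_hasDerivAt {n : ℕ} (A : Finset (Fin n)) (m : ℤ) (x ξ : Fin n → ℝ) (t : ℝ) :
    HasDerivAt (fun s : ℝ => esymmOn A m (x + s • ξ))
      (∑ p ∈ A, esymmOn (A.erase p) (m - 1) (x + t • ξ) * ξ p) t := by
  induction A using Finset.induction_on generalizing m with
  | empty =>
    have : (fun s : ℝ => esymmOn ∅ m (x + s • ξ)) = fun _ => esymmOn ∅ m x := by
      funext s
      rcases eq_or_ne m 0 with rfl | h
      · simp [esymmOn_zero]
      · simp [esymmOn_empty h]
    rw [this]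
    simpa using hasDerivAt_const t _
  | insert a A ha ih =>
    have hl : HasDerivAt (fun s : ℝ => (x + s • ξ) a) (ξ a) t := by
      simpa using ((hasDerivAt_id t).mul_const (ξ a)).const_add (x a)
    simp only [esymmOn_insert ha]
    refine ((hl.fun_mul (ih (m - 1))).fun_add (ih m)).congr_deriv ?_
    rw [sum_esymmOn_insert_erase ha]
    ring

/-- If `g(t) g(-t) ≤ g(0)²` near `0`, then `g(0) g''(0) ≤ g'(0)²`: otherwise `g(t) g(-t)` would
have both a local maximum and a local minimum at `0`, hence be constant near `0`. -/
lemma second_order_of_local {g g1 : ℝ → ℝ} {c : ℝ} (hg : ∀ t, HasDerivAt g (g1 t) t)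
    (hg1 : HasDerivAt g1 c 0) (hloc : ∀ᶠ t in nhds (0 : ℝ), g t * g (-t) ≤ g 0 ^ 2) :
    g 0 * c ≤ g1 0 ^ 2 := by
  by_contra! hcon
  have hgn : ∀ t, HasDerivAt (fun t => g (-t)) (-g1 (-t)) t := fun t =>
    ((hg (-t)).comp t (hasDerivAt_neg t)).congr_deriv (by ring)
  have hg1n : HasDerivAt (fun t => g1 (-t)) (-c) 0 := by
    have h : HasDerivAt g1 c (-0) := by simpa using hg1
    exact (h.comp 0 (hasDerivAt_neg 0)).congr_deriv (by ring)
  have hh : ∀ t, HasDerivAt (fun t => g t * g (-t)) (g1 t * g (-t) + g t * (-g1 (-t))) t :=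
    fun t => (hg t).mul (hgn t)
  have hd : deriv (fun t => g t * g (-t)) = fun t => g1 t * g (-t) + g t * (-g1 (-t)) :=
    funext fun t => (hh t).deriv
  have hdd : HasDerivAt (fun t => g1 t * g (-t) + g t * (-g1 (-t)))
      (2 * (g 0 * c - g1 0 ^ 2)) 0 := by
    refine ((hg1.fun_mul (hgn 0)).fun_add ((hg 0).fun_mul hg1n.fun_neg)).congr_deriv ?_
    simp only [neg_zero]
    ring
  have hmin : IsLocalMin (fun t => g t * g (-t)) 0 := by
    apply isLocalMin_of_deriv_deriv_pos
    · rw [hd, hdd.deriv]; linarith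
    · rw [hd]; simp; ring
    · exact (hh 0).continuousAt
  have hconst : (fun t => g t * g (-t)) =ᶠ[nhds 0] fun _ => g 0 ^ 2 := by
    filter_upwards [hmin, hloc] with t h1 h2
    simp only [neg_zero] at h1
    nlinarith
  have h1 := hconst.deriv.deriv_eq
  rw [hd, hdd.deriv] at h1
  simp at h1
  linarith

lemma hessian_le_sq_deriv_of_pos {n k : ℕ} (hkn : k ≤ n) {κ : Fin n → ℝ}
    (hκ : ∀ i, 0 < κ i) (ξ : Fin n → ℝ) :
    esym (k : ℤ) κ * ∑ p : Fin n, ∑ q ∈ Finset.univ.erase p,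
        esymD2 ((k : ℤ) - 2) κ p q * ξ p * ξ q
      ≤ esymDeriv (k : ℤ) κ ξ ^ 2 := by
  have hg := fun t => esymmOn_hasDerivAt (Finset.univ : Finset (Fin n)) (k : ℤ) κ ξ t
  have hg1 : HasDerivAt (fun t : ℝ => ∑ p : Fin n,
      esymmOn (Finset.univ.erase p) ((k : ℤ) - 1) (κ + t • ξ) * ξ p)
      (∑ p : Fin n, (∑ q ∈ Finset.univ.erase p,
        esymmOn ((Finset.univ.erase p).erase q) ((k : ℤ) - 1 - 1) (κ + (0 : ℝ) • ξ) * ξ q)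
          * ξ p) 0 :=
    HasDerivAt.fun_sum fun p _ => (esymmOn_hasDerivAt _ _ κ ξ 0).mul_const (ξ p)
  have hloc : ∀ᶠ t in nhds (0 : ℝ),
      esymmOn Finset.univ (k : ℤ) (κ + t • ξ) * esymmOn Finset.univ (k : ℤ) (κ + (-t) • ξ)
        ≤ esymmOn Finset.univ (k : ℤ) (κ + (0 : ℝ) • ξ) ^ 2 := by
    have hp : ∀ᶠ t in nhds (0 : ℝ), ∀ i, 0 < κ i + t * ξ i ∧ 0 < κ i + (-t) * ξ i := by
      rw [Filter.eventually_all]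
      intro i
      have c1 : Filter.Tendsto (fun t : ℝ => κ i + t * ξ i) (nhds 0) (nhds (κ i + 0 * ξ i)) :=
        Continuous.tendsto (by fun_prop) 0
      have c2 : Filter.Tendsto (fun t : ℝ => κ i + (-t) * ξ i) (nhds 0)
          (nhds (κ i + (-0) * ξ i)) := Continuous.tendsto (by fun_prop) 0
      exact (c1.eventually_const_lt (by simpa using hκ i)).and
        (c2.eventually_const_lt (by simpa using hκ i))
    filter_upwards [hp] with t ht
    have h := esymmOn_logConcave k (Finset.univ : Finset (Fin n)) (by simpa using hkn)
      (x := κ + t • ξ) (y := κ + (-t) • ξ) (fun i => by simpa using (ht i).1)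
      (fun i => by simpa using (ht i).2)
    have e : (κ + t • ξ) + (κ + (-t) • ξ) = (2 : ℝ) • κ := by
      funext i; simp; ring
    rw [e, esymmOn_smul, mul_pow, ← pow_mul, mul_comm k 2, pow_mul] at h
    norm_num at h
    simpa using h
  have h := second_order_of_local hg hg1 hloc
  simp only [zero_smul, add_zero] at h
  refine le_trans (le_of_eq ?_) h
  unfold esym
  congr 1
  refine Finset.sum_congr rfl fun p _ => ?_
  rw [Finset.sum_mul]
  refine Finset.sum_congr rfl fun q _ => ?_
  rw [show (k : ℤ) - 1 - 1 = k - 2 by ring]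
  unfold esymD2
  ring

lemma hessian_le_sq_deriv {n k : ℕ} (hkn : k ≤ n) {κ : Fin n → ℝ}
    (hκ : ∀ i, 0 ≤ κ i) (ξ : Fin n → ℝ) :
    esym (k : ℤ) κ * ∑ p : Fin n, ∑ q ∈ Finset.univ.erase p,
        esymD2 ((k : ℤ) - 2) κ p q * ξ p * ξ q
      ≤ esymDeriv (k : ℤ) κ ξ ^ 2 := by
  -- Approximate `κ` by the positive vectors `κ + ε (1, …, 1)`.
  have hc : ∀ (A : Finset (Fin n)) (m : ℤ),
      Continuous fun ε : ℝ => esymmOn A m (κ + ε • (1 : Fin n → ℝ)) := fun A m =>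
    continuous_iff_continuousAt.2 fun t => (esymmOn_hasDerivAt A m κ 1 t).continuousAt
  have hL : Continuous fun ε : ℝ => esym (k : ℤ) (κ + ε • (1 : Fin n → ℝ)) *
      ∑ p : Fin n, ∑ q ∈ Finset.univ.erase p,
        esymD2 ((k : ℤ) - 2) (κ + ε • (1 : Fin n → ℝ)) p q * ξ p * ξ q :=
    (hc _ _).mul (continuous_finsetSum _ fun p _ => continuous_finsetSum _ fun q _ =>
      ((hc _ _).mul continuous_const).mul continuous_const)
  have hR : Continuous fun ε : ℝ => esymDeriv (k : ℤ) (κ + ε • (1 : Fin n → ℝ)) ξ ^ 2 :=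
    (continuous_finsetSum _ fun p _ => (hc _ _).mul continuous_const).pow 2
  have h := le_of_tendsto_of_tendsto (b := nhdsWithin (0 : ℝ) (Set.Ioi 0))
    ((hL.tendsto 0).mono_left nhdsWithin_le_nhds) ((hR.tendsto 0).mono_left nhdsWithin_le_nhds)
    (by
      filter_upwards [self_mem_nhdsWithin] with ε hε
      exact hessian_le_sq_deriv_of_pos hkn
        (fun i => by simpa using add_pos_of_nonneg_of_pos (hκ i) hε) ξ)
  simpa using h

/-! ### The remaining quadratic form -/

/-- A weighted Cauchy–Schwarz inequality; here `R`, `X`, `u` are the sums of `κ_j²`, `ξ_j²`,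
`κ_j ξ_j` over `j ≠ i`, and `a = κ_i`, `z = ξ_i`. -/
lemma weighted_cauchy {R X u a z : ℝ} (hR : 0 < R) (hu : u ^ 2 ≤ R * X) (ha : 3 * a ^ 2 ≤ R) :
    2 * (u + a * z) ^ 2 ≤ (R + a ^ 2) * (3 * X + z ^ 2) := by
  have h1 : 0 ≤ (R + 3 * a ^ 2) * u ^ 2 - 4 * R * a * u * z + R * (R - a ^ 2) * z ^ 2 := by
    have hpos : 0 < R + 3 * a ^ 2 := by positivity
    refine nonneg_of_mul_nonneg_right (a := R + 3 * a ^ 2) ?_ hpos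
    have h2 : 0 ≤ R * z ^ 2 * ((R - 3 * a ^ 2) * (R + a ^ 2)) :=
      mul_nonneg (by positivity) (mul_nonneg (by linarith) (by positivity))
    have h3 := sq_nonneg ((R + 3 * a ^ 2) * u - 2 * R * a * z)
    nlinarith
  have h2 : 3 * (R + a ^ 2) * u ^ 2 ≤ 3 * (R + a ^ 2) * (R * X) :=
    mul_le_mul_of_nonneg_left hu (by positivity)
  refine le_of_mul_le_mul_left ?_ hR
  nlinarith

lemma esymD1_le {n : ℕ} (m : ℤ) {κ : Fin n → ℝ} (hκ : ∀ i, 0 ≤ κ i) {i j : Fin n} (hij : j ≠ i) :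
    esymD1 (m - 1) κ i ≤ κ j * esymD2 (m - 2) κ i j + esymD1 (m - 1) κ j := by
  unfold esymD1 esymD2
  have h1 := esymmOn_erase (Finset.mem_erase.2 ⟨hij, Finset.mem_univ j⟩) (m - 1) κ
  have h2 := esymmOn_erase (Finset.mem_erase.2 ⟨hij.symm, Finset.mem_univ i⟩) (m - 1) κ
  have h3 := mul_nonneg (hκ i) (esymmOn_nonneg ((Finset.univ.erase j).erase i) (m - 1 - 1) hκ)
  rw [show m - 1 - 1 = m - 2 by ring] at h1 h2 h3
  rw [Finset.erase_right_comm] at h2 h3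
  linarith

/-- Lemma 17. -/
theorem lemma17 (n k : ℕ) (hn : 2 ≤ n) (hk2 : 2 ≤ k) (hkn : k ≤ n)
    (f₀ : ℝ) (hf₀ : 0 < f₀) :
    ∃ K : ℝ, 0 < K ∧
      ∀ κ : Fin n → ℝ,
        (∀ i j : Fin n, i ≤ j → κ j ≤ κ i) → (∀ i : Fin n, 0 ≤ κ i) →
        f₀ ≤ esym (k : ℤ) κ →
        ∀ i : Fin n, i ≠ ⟨0, by omega⟩ →
          Real.sqrt 3 * κ i ≤ κ ⟨0, by omega⟩ →
        ∀ ξ : Fin n → ℝ,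
          0 ≤ (κ i / ∑ l : Fin n, κ l ^ 2) * (K * (esymDeriv (k : ℤ) κ ξ) ^ 2
                - ∑ p : Fin n, ∑ q ∈ Finset.univ.erase p,
                    esymD2 ((k : ℤ) - 2) κ p q * ξ p * ξ q)
              + (2 / ∑ l : Fin n, κ l ^ 2) * ∑ j ∈ Finset.univ.erase i,
                  κ j * esymD2 ((k : ℤ) - 2) κ i j * ξ j ^ 2
              + (2 / ∑ l : Fin n, κ l ^ 2) * ∑ j ∈ Finset.univ.erase i,
                  esymD1 ((k : ℤ) - 1) κ j * ξ j ^ 2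
              + (esymD1 ((k : ℤ) - 1) κ i / ∑ l : Fin n, κ l ^ 2) * ∑ j : Fin n, ξ j ^ 2
              - (2 * esymD1 ((k : ℤ) - 1) κ i / (∑ l : Fin n, κ l ^ 2) ^ 2)
                  * (∑ j : Fin n, κ j * ξ j) ^ 2 := by
  refine ⟨1 / f₀, by positivity, ?_⟩
  intro κ _ hκ hf i hi h3 ξ
  set P := ∑ l : Fin n, κ l ^ 2 with hP
  set S := esymD1 ((k : ℤ) - 1) κ i with hS
  have hS0 : 0 ≤ S := esymmOn_nonneg _ _ hκ
  have hPR : P = (∑ l ∈ Finset.univ.erase i, κ l ^ 2) + κ i ^ 2 := by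
    rw [hP, Finset.sum_erase_add _ _ (Finset.mem_univ i)]
  have hR3 : 3 * κ i ^ 2 ≤ ∑ l ∈ Finset.univ.erase i, κ l ^ 2 := by
    have h1 : κ ⟨0, by omega⟩ ^ 2 ≤ ∑ l ∈ Finset.univ.erase i, κ l ^ 2 :=
      Finset.single_le_sum (f := fun l => κ l ^ 2) (fun l _ => sq_nonneg _)
        (Finset.mem_erase.2 ⟨hi.symm, Finset.mem_univ _⟩)
    have h2 : (Real.sqrt 3 * κ i) ^ 2 ≤ κ ⟨0, by omega⟩ ^ 2 :=
      pow_le_pow_left₀ (mul_nonneg (Real.sqrt_nonneg 3) (hκ i)) h3 2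
    rw [mul_pow, Real.sq_sqrt (by norm_num)] at h2
    linarith
  have hP0 : 0 ≤ P := Finset.sum_nonneg fun l _ => sq_nonneg _
  rcases hP0.eq_or_lt with hPz | hPpos
  · simp [← hPz]
  have hRpos : 0 < ∑ l ∈ Finset.univ.erase i, κ l ^ 2 := by nlinarith [sq_nonneg (κ i)]
  have hA : 0 ≤ 1 / f₀ * (esymDeriv (k : ℤ) κ ξ) ^ 2
      - ∑ p : Fin n, ∑ q ∈ Finset.univ.erase p, esymD2 ((k : ℤ) - 2) κ p q * ξ p * ξ q := by
    have h := hessian_le_sq_deriv hkn hκ ξ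
    have hpos : 0 < esym (k : ℤ) κ := lt_of_lt_of_le hf₀ hf
    rw [mul_comm, ← le_div_iff₀ hpos] at h
    have h' : esymDeriv (k : ℤ) κ ξ ^ 2 / esym (k : ℤ) κ ≤ esymDeriv (k : ℤ) κ ξ ^ 2 / f₀ :=
      div_le_div_of_nonneg_left (sq_nonneg _) hf₀ hf
    have h'' : 1 / f₀ * (esymDeriv (k : ℤ) κ ξ) ^ 2 = esymDeriv (k : ℤ) κ ξ ^ 2 / f₀ := by ring
    linarith
  have hBC : S * ∑ j ∈ Finset.univ.erase i, ξ j ^ 2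
      ≤ ∑ j ∈ Finset.univ.erase i, κ j * esymD2 ((k : ℤ) - 2) κ i j * ξ j ^ 2
        + ∑ j ∈ Finset.univ.erase i, esymD1 ((k : ℤ) - 1) κ j * ξ j ^ 2 := by
    rw [Finset.mul_sum, ← Finset.sum_add_distrib]
    refine Finset.sum_le_sum fun j hj => ?_
    rw [← add_mul]
    exact mul_le_mul_of_nonneg_right (esymD1_le (k : ℤ) hκ (Finset.ne_of_mem_erase hj))
      (sq_nonneg _)
  have hCS := weighted_cauchy (z := ξ i) hRpos
    (Finset.sum_mul_sq_le_sq_mul_sq (Finset.univ.erase i) κ ξ) hR3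
  rw [← hPR, Finset.sum_erase_add (f := fun j => κ j * ξ j) _ (Finset.mem_univ i)] at hCS
  rw [← Finset.sum_erase_add (f := fun j => ξ j ^ 2) Finset.univ (Finset.mem_univ i)]
  set T := ∑ j : Fin n, κ j * ξ j
  set X := ∑ j ∈ Finset.univ.erase i, ξ j ^ 2
  set G := 1 / f₀ * (esymDeriv (k : ℤ) κ ξ) ^ 2
      - ∑ p : Fin n, ∑ q ∈ Finset.univ.erase p, esymD2 ((k : ℤ) - 2) κ p q * ξ p * ξ q
  set B := ∑ j ∈ Finset.univ.erase i, κ j * esymD2 ((k : ℤ) - 2) κ i j * ξ j ^ 2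
  set C := ∑ j ∈ Finset.univ.erase i, esymD1 ((k : ℤ) - 1) κ j * ξ j ^ 2
  have key : κ i / P * G + 2 / P * B + 2 / P * C + S / P * (X + ξ i ^ 2) - 2 * S / P ^ 2 * T ^ 2
      = κ i * G / P + 2 * (B + C - S * X) / P
        + S * (P * (3 * X + ξ i ^ 2) - 2 * T ^ 2) / P ^ 2 := by
    field_simp
    ring
  rw [key]
  have t1 : 0 ≤ κ i * G / P := div_nonneg (mul_nonneg (hκ i) hA) hP0
  have t2 : 0 ≤ 2 * (B + C - S * X) / P := div_nonneg (by linarith) hP0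
  have t3 : 0 ≤ S * (P * (3 * X + ξ i ^ 2) - 2 * T ^ 2) / P ^ 2 :=
    div_nonneg (mul_nonneg hS0 (by linarith)) (sq_nonneg P)
  linarith
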